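/- The function x ↦ (cos x · sin(cos x) − sin 1)/(sin x)² tends to −(cos 1 + sin 1)/2 as x tends to 0 along nonzero values. -/

import Mathlib

open Real Filter Topology

/-!
Since `sin² x = 1 - cos² x`, the quotient is `(f c - f 1) / (g c - g 1)` at `c = cos x`, where
`f c = c * sin c` and `g c = 1 - c ^ 2`. As `cos x → 1` through values other than `1`, the limit
is `f' 1 / g' 1 = (sin 1 + cos 1) / (-2)`.
-/

theorem tendsto_sub_div_sub_of_hasDerivAt {𝕜 : Type*} [NontriviallyNormedField 𝕜]
    {f g : 𝕜 → 𝕜} {f' g' a : 𝕜} (hf : HasDerivAt f f' a) (hg : HasDerivAt g g' a)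
    (hg' : g' ≠ 0) :
    Tendsto (fun x => (f x - f a) / (g x - g a)) (𝓝[≠] a) (𝓝 (f' / g')) := by
  refine (hf.tendsto_slope.div hg.tendsto_slope hg').congr' ?_
  filter_upwards [self_mem_nhdsWithin] with x hx
  simp only [Pi.div_apply, slope_def_field]
  exact div_div_div_cancel_right₀ (sub_ne_zero.mpr hx) _ _

theorem tendsto_cos_nhdsNE (a : ℝ) : Tendsto cos (𝓝[≠] a) (𝓝[≠] (cos a)) := by
  by_cases ha : sin a = 0
  · have cos_ne_zero : cos a ≠ 0 := fun h => by simpa [ha, h] using sin_sq_add_cos_sq a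
    refine tendsto_nhdsWithin_iff.mpr ⟨continuous_cos.continuousAt.mono_left nhdsWithin_le_nhds, ?_⟩
    -- `cos` is stationary at `a`, so use that `sin` has a simple zero there and `cos² = 1 - sin²`.
    filter_upwards [(hasDerivAt_sin a).eventually_ne (c := 0) cos_ne_zero] with x sin_ne_zero
    intro (cos_eq : cos x = cos a)
    have sin_sq_eq : sin x ^ 2 = sin a ^ 2 := by rw [sin_sq, sin_sq, cos_eq]
    simp [ha, sin_ne_zero] at sin_sq_eq
  · exact (hasDerivAt_cos a).tendsto_nhdsNE (neg_ne_zero.mpr ha)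

theorem tendsto_comp_cos_sub_div_sin_sq_sub {f : ℝ → ℝ} {f' a : ℝ}
    (hf : HasDerivAt f f' (cos a)) (ha : cos a ≠ 0) :
    Tendsto (fun x => (f (cos x) - f (cos a)) / (sin x ^ 2 - sin a ^ 2))
      (𝓝[≠] a) (𝓝 (-f' / (2 * cos a))) := by
  have hg : HasDerivAt (fun c : ℝ => 1 - c ^ 2) (-(2 * cos a)) (cos a) := by
    simpa using (hasDerivAt_pow 2 (cos a)).const_sub 1
  have hg' : -(2 * cos a) ≠ 0 := neg_ne_zero.mpr (mul_ne_zero two_ne_zero ha)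
  simpa only [Function.comp_def, ← sin_sq, div_neg, neg_div] using
    (tendsto_sub_div_sub_of_hasDerivAt hf hg hg').comp (tendsto_cos_nhdsNE a)

theorem stmt_11 :
    Filter.Tendsto
      (fun x : ℝ => (Real.cos x * Real.sin (Real.cos x) - Real.sin 1) / (Real.sin x) ^ 2)
      (nhdsWithin 0 {x : ℝ | x ≠ 0})
      (nhds (-(Real.cos 1 + Real.sin 1) / 2)) := by
  have hf : HasDerivAt (fun c : ℝ => c * sin c) (cos 1 + sin 1) (cos 0) := by
    simpa [add_comm] using (hasDerivAt_id' (cos 0)).fun_mul (hasDerivAt_sin (cos 0))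
  have cos_zero_ne_zero : cos 0 ≠ 0 := by simp
  simpa [Set.compl_def] using tendsto_comp_cos_sub_div_sin_sq_sub hf cos_zero_ne_zero
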